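/- Under the standing hypotheses, let ε be the exponent from the hypothesis g(i)/g(i−1) = 1 + O(i^{−1/2−ε}), set K = max{6, 2/ε}, and for a positive integer n with f(f(n)) > 1 let N = Π_Q(f(n)) and write N = N′·N″, where N″ is the largest divisor of N of the form ∏ v^{a_v} over primes v | N with ν_v(N) ≤ (log₂ n)^K, and N′ = N/N″ (so every prime power q^{b} ∥ N′ has b > (log₂ n)^K). Then log f(N′) ≪ √((log n)·log₃ n)/(log₂ n)², where the implied constant depends on Q and f. -/

import Mathlib

open Filter

/-!
Let `S m` be the sum of the prime factors of `m`, counted with multiplicity. It is additive and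
`S m ≤ m`, so `f (p ^ ν) ≤ c * ν` gives `S (f n) ≤ c * Ω n ≪ log n`. If `M ∣ f n` has `r` prime
factors, each with exponent at least `(log₂ n) ^ 6`, then `r² (log₂ n) ^ 6 ≪ S M ≪ log n`, because
`r` distinct positive integers sum to at least `r² / 2`. Each of the `r` prime powers contributes
`≪ log₂ n` to `log f(M)`, whence `log f(M) ≪ √(log n) / (log₂ n)²`.
-/

open ArithmeticFunction (cardFactors)

/-- The sum of the prime factors of `n`, counted with multiplicity; it is `0` at `n = 0`. Its
value at `f n` is `≪ log n`, which limits the number of primes dividing `f n` to a high power. -/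
def sumPrimeFactors (n : ℕ) : ℕ := n.primeFactorsList.sum

lemma sumPrimeFactors_mul_le (a b : ℕ) :
    sumPrimeFactors (a * b) ≤ sumPrimeFactors a + sumPrimeFactors b := by
  rcases eq_or_ne a 0 with rfl | ha
  · simp [sumPrimeFactors]
  rcases eq_or_ne b 0 with rfl | hb
  · simp [sumPrimeFactors]
  · rw [sumPrimeFactors, (Nat.perm_primeFactorsList_mul ha hb).sum_eq, List.sum_append]
    rfl

lemma sumPrimeFactors_le_self (n : ℕ) : sumPrimeFactors n ≤ n := by
  induction n using Nat.recOnMul with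
  | zero => simp [sumPrimeFactors]
  | one => simp [sumPrimeFactors]
  | prime p hp => simp [sumPrimeFactors, Nat.primeFactorsList_prime hp]
  | mul a b iha ihb =>
    rcases Nat.lt_or_ge a 2 with ha | ha
    · interval_cases a
      · simp [sumPrimeFactors]
      · rwa [one_mul]
    rcases Nat.lt_or_ge b 2 with hb | hb
    · interval_cases b
      · simp [sumPrimeFactors]
      · rwa [mul_one]
    calc sumPrimeFactors (a * b) ≤ sumPrimeFactors a + sumPrimeFactors b :=
          sumPrimeFactors_mul_le a b
      _ ≤ a + b := add_le_add iha ihb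
      _ ≤ a * b := Nat.add_le_mul ha hb

lemma sumPrimeFactors_le_of_dvd {m n : ℕ} (hn : n ≠ 0) (hmn : m ∣ n) :
    sumPrimeFactors m ≤ sumPrimeFactors n :=
  (Nat.primeFactorsList_sublist_of_dvd hmn hn).sum_le_sum fun _ _ => Nat.zero_le _

lemma sumPrimeFactors_eq_sum (n : ℕ) :
    sumPrimeFactors n = ∑ p ∈ n.primeFactors, n.factorization p * p := by
  simp only [sumPrimeFactors, Finset.sum_list_count, Nat.primeFactorsList_count_eq, smul_eq_mul,
    Nat.primeFactors]

lemma factorization_le_sumPrimeFactors {n p : ℕ} (hp : p ∈ n.primeFactors) :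
    n.factorization p ≤ sumPrimeFactors n :=
  calc n.factorization p ≤ n.factorization p * p :=
        Nat.le_mul_of_pos_right _ (Nat.pos_of_mem_primeFactors hp)
    _ ≤ ∑ p ∈ n.primeFactors, n.factorization p * p :=
        Finset.single_le_sum (f := fun p => n.factorization p * p) (fun _ _ => Nat.zero_le _) hp
    _ = sumPrimeFactors n := (sumPrimeFactors_eq_sum n).symm

lemma card_mul_card_add_one_le_two_mul_sum {s : Finset ℕ} (hs : 0 ∉ s) :
    s.card * (s.card + 1) ≤ 2 * ∑ x ∈ s, x := by
  induction s using Finset.induction_on_max with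
  | empty => simp
  | insert a s hmax ih =>
    have ha : a ∉ s := fun h => (hmax a h).false
    have hcard : s.card + 1 ≤ a := by
      have hsub : insert a s ⊆ Finset.Icc 1 a := fun x hx => Finset.mem_Icc.2
        ⟨Nat.one_le_iff_ne_zero.2 (ne_of_mem_of_not_mem hx hs),
          (Finset.mem_insert.1 hx).elim Eq.le fun h => (hmax x h).le⟩
      simpa [ha] using Finset.card_le_card hsub
    have hsum := ih fun h => hs (Finset.mem_insert_of_mem h)
    rw [Finset.card_insert_of_notMem ha, Finset.sum_insert ha]
    linarith

lemma card_primeFactors_sq_mul_le {n : ℕ} {k : ℝ} (hk : 0 ≤ k)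
    (hexp : ∀ p ∈ n.primeFactors, k ≤ n.factorization p) :
    (n.primeFactors.card : ℝ) ^ 2 * k ≤ 2 * sumPrimeFactors n := by
  have hcard : (n.primeFactors.card : ℝ) ^ 2 ≤ 2 * ∑ p ∈ n.primeFactors, (p : ℝ) := by
    have h := card_mul_card_add_one_le_two_mul_sum (s := n.primeFactors) (by simp)
    have hsq : n.primeFactors.card ^ 2 ≤ 2 * ∑ p ∈ n.primeFactors, p := by linarith
    rw [← Nat.cast_sum]
    exact_mod_cast hsq
  calc (n.primeFactors.card : ℝ) ^ 2 * k
      ≤ (2 * ∑ p ∈ n.primeFactors, (p : ℝ)) * k := mul_le_mul_of_nonneg_right hcard hk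
    _ = 2 * ∑ p ∈ n.primeFactors, k * p := by rw [← Finset.mul_sum]; ring
    _ ≤ 2 * ∑ p ∈ n.primeFactors, (n.factorization p : ℝ) * p := by
        gcongr with p hp
        exact hexp p hp
    _ = 2 * sumPrimeFactors n := by rw [sumPrimeFactors_eq_sum]; push_cast; rfl

lemma cardFactors_le_two_mul_log {n : ℕ} (hn : n ≠ 0) :
    (cardFactors n : ℝ) ≤ 2 * Real.log n := by
  have hpow : 2 ^ cardFactors n ≤ n := by
    conv_rhs => rw [← Nat.prod_primeFactorsList hn]
    exact List.pow_card_le_prod _ _ fun p hp => (Nat.prime_of_mem_primeFactorsList hp).two_le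
  have hlog : cardFactors n * Real.log 2 ≤ Real.log n := by
    rw [← Real.log_pow]
    exact Real.log_le_log (by positivity) (by exact_mod_cast hpow)
  nlinarith [Real.log_two_gt_d9, (cardFactors n).cast_nonneg (α := ℝ)]

section Multiplicative

variable {f : ℕ → ℕ} {c : ℝ}

lemma sumPrimeFactors_apply_le (hf1 : f 1 = 1)
    (hfmul : ∀ a b : ℕ, a.Coprime b → f (a * b) = f a * f b)
    (hfpow : ∀ p ν : ℕ, p.Prime → 1 ≤ ν → (f (p ^ ν) : ℝ) ≤ c * ν) {n : ℕ} (hn : n ≠ 0) :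
    (sumPrimeFactors (f n) : ℝ) ≤ c * cardFactors n := by
  induction n using Nat.recOnPosPrimePosCoprime with
  | zero => exact absurd rfl hn
  | one => simp [hf1, sumPrimeFactors]
  | prime_pow p ν hp hν =>
    rw [ArithmeticFunction.cardFactors_apply_prime_pow hp]
    exact (Nat.cast_le.2 (sumPrimeFactors_le_self _)).trans (hfpow p ν hp hν)
  | coprime a b ha hb hab iha ihb =>
    have ha0 : a ≠ 0 := by omega
    have hb0 : b ≠ 0 := by omega
    calc (sumPrimeFactors (f (a * b)) : ℝ)
        ≤ sumPrimeFactors (f a) + sumPrimeFactors (f b) := by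
          rw [hfmul a b hab]; exact_mod_cast sumPrimeFactors_mul_le _ _
      _ ≤ c * cardFactors a + c * cardFactors b := add_le_add (iha ha0) (ihb hb0)
      _ = c * cardFactors (a * b) := by
          rw [ArithmeticFunction.cardFactors_mul ha0 hb0]; push_cast; ring

lemma log_apply_le_card_primeFactors_mul_log (hf1 : f 1 = 1)
    (hfmul : ∀ a b : ℕ, a.Coprime b → f (a * b) = f a * f b)
    (hfpow : ∀ p ν : ℕ, p.Prime → 1 ≤ ν → (f (p ^ ν) : ℝ) ≤ c * ν) (hc : 0 ≤ c)
    {M : ℕ} (hM : M ≠ 0) {B : ℝ} (hcB : 1 ≤ c * B)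
    (hexp : ∀ p ∈ M.primeFactors, (M.factorization p : ℝ) ≤ B) :
    Real.log (f M) ≤ M.primeFactors.card * Real.log (c * B) := by
  have hpow : ∀ p ∈ M.primeFactors, (f (p ^ M.factorization p) : ℝ) ≤ c * B := fun p hp =>
    have hprime := Nat.prime_of_mem_primeFactors hp
    (hfpow p _ hprime <| hprime.factorization_pos_of_dvd hM <| Nat.dvd_of_mem_primeFactors hp).trans
      (mul_le_mul_of_nonneg_left (hexp p hp) hc)
  have hprod : (f M : ℝ) ≤ (c * B) ^ M.primeFactors.card := by
    rw [Nat.multiplicative_factorization f hfmul hf1 hM, Finsupp.prod, Nat.support_factorization,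
      Nat.cast_prod, ← Finset.prod_const]
    exact Finset.prod_le_prod (fun _ _ => Nat.cast_nonneg _) hpow
  rw [← Real.log_pow]
  rcases Nat.eq_zero_or_pos (f M) with hfM | hfM
  · simpa [hfM] using Real.log_nonneg (one_le_pow₀ hcB)
  · exact Real.log_le_log (Nat.cast_pos.2 hfM) hprod

end Multiplicative

lemma le_sqrt_div_pow_three {r X L b : ℝ} (hb : 0 ≤ b) (hL : 0 < L)
    (h : r ^ 2 * L ^ 6 ≤ b * X) : r ≤ √b * √X / L ^ 3 := by
  rw [le_div_iff₀ (by positivity), ← Real.sqrt_mul hb]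
  exact Real.le_sqrt_of_sq_le (by linarith [show (r * L ^ 3) ^ 2 = r ^ 2 * L ^ 6 by ring])

lemma log_mul_le_mul_log {a X : ℝ} (ha : 1 ≤ a) (hX : 0 < X) (hL : 1 ≤ Real.log X) :
    Real.log (a * X) ≤ (1 + Real.log a) * Real.log X := by
  rw [Real.log_mul (by positivity) hX.ne']
  nlinarith [Real.log_nonneg ha]

theorem log_f_of_large_exponent_part_small_general {f : ℕ → ℕ} {c : ℝ} (hf1 : f 1 = 1)
    (hfmul : ∀ a b : ℕ, a.Coprime b → f (a * b) = f a * f b) (hc : 1 ≤ c)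
    (hfpow : ∀ p ν : ℕ, p.Prime → 1 ≤ ν → (f (p ^ ν) : ℝ) ≤ c * ν) :
    ∃ C : ℝ, 0 < C ∧ ∀ n M : ℕ, 1 ≤ Real.log (Real.log n) → f n ≠ 0 → M ∣ f n →
      (∀ p ∈ M.primeFactors, Real.log (Real.log n) ^ 6 ≤ M.factorization p) →
      Real.log (f M) ≤ C * √(Real.log n) / Real.log (Real.log n) ^ 2 := by
  have hlogc : 0 ≤ Real.log (2 * c ^ 2) := Real.log_nonneg (by nlinarith)
  refine ⟨√(4 * c) * (1 + Real.log (2 * c ^ 2)), by positivity, fun n M hL hfn hMdvd hexp => ?_⟩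
  have hX1 : 1 ≤ Real.log n :=
    ((Real.log_pos_iff (Real.log_natCast_nonneg n)).1 (zero_lt_one.trans_le hL)).le
  have hn : n ≠ 0 := by rintro rfl; norm_num at hX1
  set X := Real.log n
  set L := Real.log X
  have hsum : (sumPrimeFactors M : ℝ) ≤ 2 * c * X :=
    calc (sumPrimeFactors M : ℝ) ≤ sumPrimeFactors (f n) :=
          Nat.cast_le.2 (sumPrimeFactors_le_of_dvd hfn hMdvd)
      _ ≤ c * cardFactors n := sumPrimeFactors_apply_le hf1 hfmul hfpow hn
      _ ≤ c * (2 * X) := by gcongr; exact cardFactors_le_two_mul_log hn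
      _ = 2 * c * X := by ring
  have hcard : (M.primeFactors.card : ℝ) ≤ √(4 * c) * √X / L ^ 3 :=
    le_sqrt_div_pow_three (by positivity) (by positivity)
      (by linarith [card_primeFactors_sq_mul_le (by positivity) hexp])
  have hlog : Real.log (c * (2 * c * X)) ≤ (1 + Real.log (2 * c ^ 2)) * L := by
    rw [show c * (2 * c * X) = 2 * c ^ 2 * X by ring]
    exact log_mul_le_mul_log (by nlinarith) (by positivity) hL
  have hcX : 1 ≤ c * (2 * c * X) := by nlinarith [mul_le_mul hc hX1 zero_le_one (by positivity)]
  calc Real.log (f M) ≤ M.primeFactors.card * Real.log (c * (2 * c * X)) :=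
        log_apply_le_card_primeFactors_mul_log hf1 hfmul hfpow (by positivity)
          (ne_zero_of_dvd_ne_zero hfn hMdvd) hcX fun p hp =>
            (Nat.cast_le.2 (factorization_le_sumPrimeFactors hp)).trans hsum
    _ ≤ √(4 * c) * √X / L ^ 3 * ((1 + Real.log (2 * c ^ 2)) * L) := by
        gcongr; exact Real.log_nonneg hcX
    _ = √(4 * c) * (1 + Real.log (2 * c ^ 2)) * √X / L ^ 2 := by field_simp

/-- The part of `n` supported on the primes satisfying `P`. For `P` the membership in `Q` this is
the paper's `Π_Q(n)`; for `P` a lower bound on the exponent it is the paper's `N′`. -/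
def primePart (P : ℕ → Prop) [DecidablePred P] (n : ℕ) : ℕ :=
  ∏ p ∈ n.primeFactors.filter P, p ^ n.factorization p

section PrimePart

variable {P : ℕ → Prop} [DecidablePred P] {n : ℕ}

lemma primePart_dvd (hn : n ≠ 0) : primePart P n ∣ n := by
  conv_rhs => rw [← Nat.prod_factorization_pow_eq_self hn]
  exact Finset.prod_dvd_prod_of_subset _ _ _ (Finset.filter_subset _ _)

lemma factorization_primePart : (primePart P n).factorization = n.factorization.filter P := by
  have hprod : primePart P n = (n.factorization.filter P).prod (· ^ ·) := by
    rw [Finsupp.prod_filter_index]; rfl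
  rw [hprod]
  exact Nat.prod_pow_factorization_eq_self fun p hp =>
    Nat.prime_of_mem_primeFactors (Finset.mem_of_mem_filter p hp)

lemma prop_and_factorization_eq_of_mem_primeFactors_primePart {p : ℕ}
    (hp : p ∈ (primePart P n).primeFactors) :
    P p ∧ (primePart P n).factorization p = n.factorization p := by
  rw [← Nat.support_factorization, factorization_primePart, Finsupp.support_filter] at hp
  have hP := (Finset.mem_filter.1 hp).2
  exact ⟨hP, by rw [factorization_primePart, Finsupp.filter_apply_pos _ _ hP]⟩

end PrimePart

lemma apply_prime_pow_le_max_one_mul {Q : ℕ → Prop} {f g : ℕ → ℕ} {c : ℝ}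
    (hg : ∀ x : ℕ, 1 ≤ x → (g x : ℝ) ≤ c * x)
    (hfQ : ∀ p ν : ℕ, p.Prime → Q p → 1 ≤ ν → f (p ^ ν) = g ν)
    (hfnotQ : ∀ p ν : ℕ, p.Prime → ¬Q p → 1 ≤ ν → f (p ^ ν) = 0 ∨ f (p ^ ν) = 1)
    (p ν : ℕ) (hp : p.Prime) (hν : 1 ≤ ν) : (f (p ^ ν) : ℝ) ≤ max 1 c * ν := by
  by_cases hQ : Q p
  · rw [hfQ p ν hp hQ hν]
    exact (hg ν hν).trans (by gcongr; exact le_max_right 1 c)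
  · have hf : (f (p ^ ν) : ℝ) ≤ 1 := by
      exact_mod_cast (hfnotQ p ν hp hQ hν).elim (fun h => h.trans_le zero_le_one) Eq.le
    exact hf.trans (one_le_mul_of_one_le_of_one_le (le_max_left 1 c) (by exact_mod_cast hν))

lemma pow_le_rpow_max {x : ℝ} (hx : 1 ≤ x) (k : ℕ) (y : ℝ) : x ^ k ≤ x ^ max (k : ℝ) y := by
  rw [← Real.rpow_natCast]
  exact Real.rpow_le_rpow_of_exponent_le hx (le_max_left _ y)

lemma exp_one_le_log_log {x : ℝ} (hx : Real.exp (Real.exp (Real.exp 1)) ≤ x) :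
    Real.exp 1 ≤ Real.log (Real.log x) := by
  have hlog : Real.exp (Real.exp 1) ≤ Real.log x :=
    (Real.le_log_iff_exp_le ((Real.exp_pos _).trans_le hx)).2 hx
  exact (Real.le_log_iff_exp_le ((Real.exp_pos _).trans_le hlog)).2 hlog

open scoped Classical in
/-- Under the standing hypotheses, with `ε` from (A.5) and `K = max{6, 2/ε}`: for `n` with
`f(f(n)) > 1`, let `N = Π_Q(f(n))` and let `N′` be the product of the prime powers
`q^b ∥ N` with `b > (log₂ n)^K`. Then `log f(N′) ≪ √((log n)·log₃ n)/(log₂ n)²`,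
with an implied constant depending on `Q` and `f`. -/
theorem log_f_of_large_exponent_part_small
    (q : ℕ → ℕ) (g f gdag : ℕ → ℕ) (κ cstar cf cdag ε : ℝ)
    -- the strictly increasing sequence of primes `q_1 < q_2 < …` with its asymptotics (A.1)
    (hqprime : ∀ j : ℕ, 1 ≤ j → (q j).Prime)
    (hqmono : ∀ j : ℕ, 1 ≤ j → q j < q (j + 1))
    (hκ : 0 < κ)
    (hqasymp : ∃ A : ℝ, ∀ j : ℕ, 2 ≤ j →
      |(q j : ℝ) - κ * j * (Real.log j + Real.log (Real.log j))| ≤ A * (κ * j))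
    -- `g` is monotonically increasing with `g(0) = 1` (A.2)
    (hg0 : g 0 = 1) (hgmono : Monotone g)
    -- the image of `g` contains the monoid `⟨Q⟩` generated by `Q = {q_j : j ≥ 1}` (A.3)
    (hgrange : ∀ m : ℕ, 0 < m → (∀ p : ℕ, p.Prime → p ∣ m → ∃ j, 1 ≤ j ∧ q j = p) →
      ∃ x : ℕ, g x = m)
    -- `gdag` is the pseudo-inverse `g†`
    (hgdagdef : ∀ y : ℕ, gdag y = sInf {x : ℕ | 0 < x ∧ g x = y})
    -- the superadditivity assumption (A.4)
    (hcstar : 1 / (q 1 : ℝ) < cstar)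
    (hsuper : ∀ a b : ℕ,
      (∀ p : ℕ, p.Prime → p ∣ a → ∃ j, 1 ≤ j ∧ q j = p) →
      (∀ p : ℕ, p.Prime → p ∣ b → ∃ j, 1 ≤ j ∧ q j = p) →
      q 1 ≤ a → a ≤ b →
      (gdag b : ℝ) + cstar * b * gdag a ≤ gdag (a * b))
    -- the growth assumption `g(i)/g(i−1) = 1 + O(i^{−1/2−ε})` (A.5)
    (hε : 0 < ε)
    (hgratio : ∃ B : ℝ, ∀ i : ℕ, 1 ≤ i →
      |(g i : ℝ) / (g (i - 1) : ℝ) - 1| ≤ B * (i : ℝ) ^ (-(1 / 2 : ℝ) - ε))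
    -- the sublinearity assumption `g(x) ≤ c_f·x` (A.6)
    (hcf : 0 < cf)
    (hgsub : ∀ x : ℕ, 1 ≤ x → (g x : ℝ) ≤ cf * x)
    -- the assumption `g†(q) = c_†·q + O(q/log q)` for `q ∈ Q` (A.7)
    (hcdag : 0 < cdag)
    (hgdagasymp : ∃ B : ℝ, ∀ j : ℕ, 1 ≤ j →
      |(gdag (q j) : ℝ) - cdag * q j| ≤ B * (q j : ℝ) / Real.log (q j))
    -- `f` is multiplicative with `f(p^ν) = g(ν)` for `p ∈ Q`, `f(p^ν) ∈ {0,1}` otherwise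
    (hf0 : f 0 = 1) (hf1 : f 1 = 1)
    (hfmult : ∀ m₁ m₂ : ℕ, Nat.Coprime m₁ m₂ → f (m₁ * m₂) = f m₁ * f m₂)
    (hfQ : ∀ p ν : ℕ, p.Prime → (∃ j, 1 ≤ j ∧ q j = p) → 1 ≤ ν → f (p ^ ν) = g ν)
    (hfnotQ : ∀ p ν : ℕ, p.Prime → ¬(∃ j, 1 ≤ j ∧ q j = p) → 1 ≤ ν →
      f (p ^ ν) = 0 ∨ f (p ^ ν) = 1) :
    ∃ C : ℝ, 0 < C ∧ ∃ n₀ : ℕ, ∀ n N N' : ℕ, n₀ ≤ n → 1 < f (f n) →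
      N = ∏ p ∈ (f n).primeFactors.filter (fun p => ∃ j, 1 ≤ j ∧ q j = p),
            p ^ (f n).factorization p →
      N' = ∏ p ∈ N.primeFactors.filter
              (fun p => Real.log (Real.log n) ^ (max 6 (2 / ε)) < (N.factorization p : ℝ)),
            p ^ N.factorization p →
      Real.log (f N') ≤
        C * Real.sqrt (Real.log n * Real.log (Real.log (Real.log n))) /
          Real.log (Real.log n) ^ 2 := by
  obtain ⟨C, hC, hbound⟩ := log_f_of_large_exponent_part_small_general hf1 hfmult
    (le_max_left 1 cf) (apply_prime_pow_le_max_one_mul hgsub hfQ hfnotQ)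
  refine ⟨C, hC, ⌈Real.exp (Real.exp (Real.exp 1))⌉₊, ?_⟩
  rintro n N _ hn hff hN rfl
  have hfn : f n ≠ 0 := fun h => by simp [h, hf0] at hff
  have hNdvd : N ∣ f n := hN ▸ primePart_dvd hfn
  have hL : Real.exp 1 ≤ Real.log (Real.log n) := exp_one_le_log_log (Nat.ceil_le.1 hn)
  have hL₁ : 1 ≤ Real.log (Real.log n) := (Real.one_le_exp zero_le_one).trans hL
  have hlog₃ : 1 ≤ Real.log (Real.log (Real.log n)) :=
    (Real.le_log_iff_exp_le (by positivity)).2 hL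
  refine (hbound n _ hL₁ hfn ((primePart_dvd (ne_zero_of_dvd_ne_zero hfn hNdvd)).trans hNdvd)
    fun p hp => ?_).trans ?_
  · obtain ⟨hlarge, heq⟩ := prop_and_factorization_eq_of_mem_primeFactors_primePart hp
    have hpow := pow_le_rpow_max hL₁ 6 (2 / ε)
    exact (hpow.trans (by exact_mod_cast hlarge.le)).trans_eq (congrArg Nat.cast heq.symm)
  · gcongr
    exact le_mul_of_one_le_right (Real.log_natCast_nonneg n) hlog₃
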